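/- arXiv:2403.12517 — 4 statements merged into one kernel-verified Lean document; each statement's English description precedes it below -/
import Mathlib

section
/- For all natural numbers m and a with a even, one has 4^m * binom(m + a/2, m) = \sum_{i=0}^{m} binom(m + a - i, a) * binom(2m + a + 1, i). -/
/-!
Both sides, as functions of `m` and `b = a / 2`, satisfy Pascal's recursion
`R (m + 1) (b + 1) = R (m + 1) b + 4 * R m (b + 1)` and agree when `m = 0` or `b = 0`.

The right-hand side is the coefficient of `X ^ m` in
`(1 + X) ^ (2 * m + 2 * b + 1) / (1 - X) ^ (2 * b + 1)`, and the recursion for it is just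
`(1 + X) ^ 2 = (1 - X) ^ 2 + 4 * X`. For `b = 0` it is the sum of the first half of an odd row of
Pascal's triangle, which is `4 ^ m`.
-/

open PowerSeries in
/-- The series `(1 + X) ^ N / (1 - X) ^ (a + 1)`. -/
noncomputable def gesselSeries (N a : ℕ) : PowerSeries ℤ :=
  (1 + X) ^ N * (invOneSubPow ℤ (a + 1)).val

lemma coeff_gesselSeries (N a m : ℕ) :
    PowerSeries.coeff m (gesselSeries N a) =
      ((∑ i ∈ Finset.range (m + 1), Nat.choose (m + a - i) a * Nat.choose N i : ℕ) : ℤ) := by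
  have h : ∀ i, PowerSeries.coeff i ((1 + PowerSeries.X : PowerSeries ℤ) ^ N)
      = (N.choose i : ℤ) := by
    intro i
    have := Polynomial.coeff_one_add_X_pow ℤ N i
    rw [← Polynomial.coeff_coe] at this
    simpa using this
  rw [gesselSeries, PowerSeries.coeff_mul, Finset.Nat.sum_antidiagonal_eq_sum_range_succ_mk,
    PowerSeries.invOneSubPow_val_succ_eq_mk_add_choose]
  push_cast
  refine Finset.sum_congr rfl fun i hi => ?_
  have hi' : m + a - i = a + (m - i) := by
    have := Finset.mem_range.mp hi
    omega
  rw [h, PowerSeries.coeff_mk, hi', mul_comm]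

/-- The identity `(1 + X) ^ 2 = (1 - X) ^ 2 + 4 * X`, multiplied by
`(1 + X) ^ N / (1 - X) ^ (a + 3)`. -/
lemma gesselSeries_rec (N a : ℕ) :
    gesselSeries (N + 2) (a + 2) =
      gesselSeries N a + 4 * (PowerSeries.X * gesselSeries N (a + 2)) := by
  have h : (PowerSeries.invOneSubPow ℤ (a + 1)).val
      = (1 - PowerSeries.X) ^ 2 * (PowerSeries.invOneSubPow ℤ (a + 2 + 1)).val := by
    rw [add_right_comm a 2 1,
      PowerSeries.one_sub_pow_mul_invOneSubPow_val_add_eq_invOneSubPow_val]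
  rw [gesselSeries, gesselSeries, gesselSeries, h]
  ring

lemma coeff_gesselSeries_eq (b : ℕ) : ∀ m : ℕ,
    PowerSeries.coeff m (gesselSeries (2 * m + 2 * b + 1) (2 * b)) =
      4 ^ m * ((m + b).choose m : ℤ) := by
  induction b with
  | zero =>
    intro m
    rw [coeff_gesselSeries]
    simp only [mul_zero, add_zero, Nat.choose_zero_right, one_mul, Nat.choose_self]
    rw [Nat.sum_range_choose_halfway]
    simp
  | succ b ihb =>
    intro m
    induction m with
    | zero => rw [coeff_gesselSeries]; simp
    | succ m ihm =>
      have e : 2 * (m + 1) + 2 * (b + 1) + 1 = (2 * (m + 1) + 2 * b + 1) + 2 := by ring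
      have e' : 2 * (m + 1) + 2 * b + 1 = 2 * m + 2 * (b + 1) + 1 := by ring
      have four : (4 : PowerSeries ℤ) = PowerSeries.C (4 : ℤ) := by simp
      rw [e, show 2 * (b + 1) = 2 * b + 2 by ring, gesselSeries_rec, map_add, ihb, four,
        PowerSeries.coeff_C_mul, PowerSeries.coeff_succ_X_mul, e',
        show 2 * b + 2 = 2 * (b + 1) by ring, ihm,
        show m + 1 + (b + 1) = (m + (b + 1)) + 1 by ring, Nat.choose_succ_succ,
        show m + 1 + b = m + (b + 1) by ring]
      push_cast
      ring

/-- **Gessel-type combinatorial identity** (Lemma 4.2):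
for all natural numbers `m` and even `a`,
`4^m * C(m + a/2, m) = ∑_{i=0}^{m} C(m + a - i, a) * C(2m + a + 1, i)`. -/
theorem gessel_identity (m a : ℕ) (ha : Even a) :
    4 ^ m * Nat.choose (m + a / 2) m =
      ∑ i ∈ Finset.range (m + 1),
        Nat.choose (m + a - i) a * Nat.choose (2 * m + a + 1) i := by
  obtain ⟨b, rfl⟩ := ha
  rw [← two_mul, Nat.mul_div_cancel_left b two_pos]
  have h := coeff_gesselSeries_eq b m
  rw [coeff_gesselSeries] at h
  exact_mod_cast h.symm
end

section
/- Let g and k be integers with g >= 2 and 0 <= k <= g - 2. Then \sum_{j=0}^{k+1} binom(2g+1, j) * binom(2g - k - 1 - j, 2(g - k - 1)) = 4^{k+1} * binom(g, k+1). -/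
/-!
Put `m = k + 1` and `n = g - m`. Since `C(2n + i, 2n)` is the coefficient of `x ^ i` in
`(1 - x)⁻⁽²ⁿ⁺¹⁾`, the sum is
`A(m, n) = [x ^ m] (1 + x) ^ (2m + 2n + 1) / (1 - x) ^ (2n + 1)` (`coeff_fanoSeries`).
The identity `(1 + x)² - 4x = (1 - x)²` gives `A(m + 1, n + 1) = 4 A(m, n + 1) + A(m + 1, n)`,
which is the recursion of `4 ^ m * C(m + n, m)` coming from Pascal's rule. The boundary values
agree: `A(0, n) = 1`, and `A(m, 0)` is the sum of the first half of row `2m + 1` of Pascal's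
triangle, namely `4 ^ m`.
-/

/-- The binomial coefficient `n choose r` for integers, with the convention
that it vanishes whenever `r < 0` or `r > n`. -/
def ibinom (n r : ℤ) : ℤ :=
  if 0 ≤ r ∧ r ≤ n then (Nat.choose n.toNat r.toNat : ℤ) else 0

open PowerSeries in
/-- The power series expansion of `1 / (1 - x) ^ (d + 1)`. -/
noncomputable def negBinomSeries (d : ℕ) : PowerSeries ℤ :=
  mk fun i => ((d + i).choose d : ℤ)

open PowerSeries in
lemma negBinomSeries_mul_sq (d : ℕ) :
    negBinomSeries (d + 2) * (1 - X) ^ 2 = negBinomSeries d := by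
  have h1 : negBinomSeries d * (1 - X) ^ (d + 1) = 1 :=
    mk_add_choose_mul_one_sub_pow_eq_one ℤ d
  have h2 : negBinomSeries (d + 2) * (1 - X) ^ (d + 2 + 1) = 1 :=
    mk_add_choose_mul_one_sub_pow_eq_one ℤ (d + 2)
  calc negBinomSeries (d + 2) * (1 - X) ^ 2
      = negBinomSeries (d + 2) * (1 - X) ^ 2 * (negBinomSeries d * (1 - X) ^ (d + 1)) := by
        rw [h1, mul_one]
    _ = negBinomSeries d * (negBinomSeries (d + 2) * (1 - X) ^ (d + 2 + 1)) := by ring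
    _ = negBinomSeries d := by rw [h2, mul_one]

open PowerSeries in
/-- The power series `(1 + x) ^ (2m + 2n + 1) / (1 - x) ^ (2n + 1)`, whose `m`-th coefficient
is the sum to be evaluated. -/
noncomputable def fanoSeries (m n : ℕ) : PowerSeries ℤ :=
  (1 + X) ^ (2 * m + 2 * n + 1) * negBinomSeries (2 * n)

open PowerSeries in
lemma coeff_fanoSeries (m n : ℕ) :
    coeff m (fanoSeries m n) = ∑ j ∈ Finset.range (m + 1),
      ((2 * m + 2 * n + 1).choose j : ℤ) * ((2 * n + (m - j)).choose (2 * n) : ℤ) := by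
  have h (N j : ℕ) : coeff j ((1 + X : PowerSeries ℤ) ^ N) = (N.choose j : ℤ) := by
    have := Polynomial.coeff_one_add_X_pow ℤ N j
    rw [← Polynomial.coeff_coe] at this
    simpa using this
  rw [fanoSeries, coeff_mul, Finset.Nat.sum_antidiagonal_eq_sum_range_succ_mk]
  simp [h, negBinomSeries]

open PowerSeries in
lemma fanoSeries_succ_succ (m n : ℕ) :
    fanoSeries (m + 1) (n + 1) = X * (4 * fanoSeries m (n + 1)) + fanoSeries (m + 1) n := by
  unfold fanoSeries
  rw [← negBinomSeries_mul_sq (2 * n), show 2 * (n + 1) = 2 * n + 2 by ring]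
  ring

open PowerSeries in
theorem coeff_fanoSeries_eq (n m : ℕ) :
    coeff m (fanoSeries m n) = 4 ^ m * ((m + n).choose m : ℤ) := by
  induction n generalizing m with
  | zero =>
    rw [coeff_fanoSeries]
    have := Nat.sum_range_choose_halfway m
    simp
    exact_mod_cast this
  | succ n ihn =>
    induction m with
    | zero => simp [coeff_fanoSeries]
    | succ m ihm =>
      have h4 : (4 : PowerSeries ℤ) = C (4 : ℤ) := by simp
      rw [fanoSeries_succ_succ, map_add, coeff_succ_X_mul, h4, coeff_C_mul, ihm, ihn,
        show m + 1 + (n + 1) = (m + n + 1) + 1 by ring, Nat.choose_succ_succ,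
        show m + (n + 1) = m + n + 1 by ring, show m + 1 + n = m + n + 1 by ring]
      push_cast
      ring

lemma ibinom_natCast (n r : ℕ) : ibinom n r = (n.choose r : ℤ) := by
  unfold ibinom
  split_ifs with h
  · simp
  · rw [Nat.choose_eq_zero_of_lt (by omega)]
    simp

/-- Euler characteristic of the Fano scheme `F_k(Q₁ ∩ Q₂)` in the stacky case
(Proposition 4.1): for integers `g ≥ 2` and `0 ≤ k ≤ g - 2`,
`∑_{j=0}^{k+1} C(2g+1, j) * C(2g - k - 1 - j, 2(g-k-1)) = 4^{k+1} * C(g, k+1)`. -/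
theorem euler_characteristic_fano_stacky (g k : ℤ) (hg : 2 ≤ g) (hk0 : 0 ≤ k)
    (hk : k ≤ g - 2) :
    ∑ j ∈ Finset.Icc (0 : ℤ) (k + 1),
        ibinom (2 * g + 1) j * ibinom (2 * g - k - 1 - j) (2 * (g - k - 1)) =
      4 ^ (k + 1).toNat * ibinom g (k + 1) := by
  obtain ⟨m, hm⟩ := Int.eq_ofNat_of_zero_le (show 0 ≤ k + 1 by omega)
  obtain ⟨n, hn⟩ := Int.eq_ofNat_of_zero_le (show 0 ≤ g - (k + 1) by omega)
  have hg' : g = ((m + n : ℕ) : ℤ) := by push_cast; omega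
  rw [hm, hg', ibinom_natCast, Int.toNat_natCast, ← coeff_fanoSeries_eq, coeff_fanoSeries]
  symm
  refine Finset.sum_bij (fun j _ => (j : ℤ)) ?_ ?_ ?_ ?_
  · intro j hj
    simp only [Finset.mem_range, Finset.mem_Icc] at *
    omega
  · intro a _ b _ h
    exact_mod_cast h
  · intro b hb
    simp only [Finset.mem_Icc] at hb
    exact ⟨b.toNat, by simp only [Finset.mem_range]; omega, by omega⟩
  · intro j hj
    simp only [Finset.mem_range] at hj
    rw [← ibinom_natCast, ← ibinom_natCast]
    congr 2 <;> push_cast <;> omega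
end

section
/- Let g, k, t be integers with g >= 2, 0 <= k <= g - 2 and 0 <= t <= k + 1. Then binom(2g - k - 1 - t, 2g - 2k - 2) = \sum_{i=t}^{k+1} (i + 1 - t) * binom(2g - 3 - k - i, k + 1 - i). -/
/-- Twice-iterated hockey-stick identity. -/
theorem sum_weighted_choose (m n : ℕ) :
    ∑ l ∈ Finset.range (n + 1), ((n : ℤ) - l + 1) * ((l + m).choose m : ℤ) =
      ((n + m + 2).choose (m + 2) : ℤ) := by
  induction n with
  | zero => simp
  | succ n ih =>
    have hockey : ∑ l ∈ Finset.range (n + 1 + 1), ((l + m).choose m : ℤ) =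
        ((n + m + 2).choose (m + 1) : ℤ) := by
      have h := Nat.sum_range_add_choose (n + 1) m
      rw [show n + 1 + m + 1 = n + m + 2 by ring] at h
      exact_mod_cast h
    have pascal : ((n + 1 + m + 2).choose (m + 2) : ℤ) =
        (n + m + 2).choose (m + 1) + (n + m + 2).choose (m + 2) := by
      rw [show n + 1 + m + 2 = n + m + 2 + 1 by ring]
      exact_mod_cast Nat.choose_succ_succ (n + m + 2) (m + 1)
    -- The term `l = n + 1` has weight `0` in the sum for `n`, so it can be included there.
    have extend : ∑ l ∈ Finset.range (n + 1 + 1), ((n : ℤ) - l + 1) * ((l + m).choose m : ℤ) =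
        ((n + m + 2).choose (m + 2) : ℤ) := by
      rw [Finset.sum_range_succ, ih]
      push_cast
      ring
    rw [pascal, ← hockey, ← extend, ← Finset.sum_add_distrib]
    refine Finset.sum_congr rfl fun l _ => ?_
    push_cast
    ring

theorem ibinom_natCast_s3 (a b : ℕ) (h : b ≤ a) : ibinom a b = (a.choose b : ℤ) := by
  simp [ibinom, h]

/-- Chu--Vandermonde-type identity from the proof of the Proposition counting
exceptional objects in the stacky case: for integers `g ≥ 2`, `0 ≤ k ≤ g - 2`
and `0 ≤ t ≤ k + 1`,
`C(2g - k - 1 - t, 2g - 2k - 2) = ∑_{i=t}^{k+1} (i + 1 - t) * C(2g-3-k-i, k+1-i)`. -/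
theorem chu_vandermonde_variant (g k t : ℤ) (hg : 2 ≤ g) (hk0 : 0 ≤ k)
    (hk : k ≤ g - 2) (ht0 : 0 ≤ t) (ht : t ≤ k + 1) :
    ibinom (2 * g - k - 1 - t) (2 * g - 2 * k - 2) =
      ∑ i ∈ Finset.Icc t (k + 1), (i + 1 - t) * ibinom (2 * g - 3 - k - i) (k + 1 - i) := by
  obtain ⟨m, hm⟩ := Int.eq_ofNat_of_zero_le (show 0 ≤ 2 * g - 2 * k - 4 by omega)
  obtain ⟨n, hn⟩ := Int.eq_ofNat_of_zero_le (show 0 ≤ k + 1 - t by omega)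
  rw [show 2 * g - k - 1 - t = ((n + m + 2 : ℕ) : ℤ) by push_cast; omega,
    show 2 * g - 2 * k - 2 = ((m + 2 : ℕ) : ℤ) by push_cast; omega,
    ibinom_natCast_s3 _ _ (by omega), ← sum_weighted_choose]
  refine Finset.sum_bij' (fun l _ => k + 1 - (l : ℤ)) (fun i _ => (k + 1 - i).toNat)
    ?_ ?_ ?_ ?_ ?_
  · intro l hl
    simp only [Finset.mem_range, Finset.mem_Icc] at *
    omega
  · intro i hi
    simp only [Finset.mem_range, Finset.mem_Icc] at *
    omega
  · intro l hl
    simp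
  · intro i hi
    simp only [Finset.mem_Icc] at *
    omega
  · intro l hl
    rw [show 2 * g - 3 - k - (k + 1 - (l : ℤ)) = ((l + m : ℕ) : ℤ) by push_cast; omega,
      show k + 1 - (k + 1 - (l : ℤ)) = (l : ℤ) by ring,
      ibinom_natCast_s3 _ _ (by omega), Nat.choose_symm_add,
      show k + 1 - (l : ℤ) + 1 - t = (n : ℤ) - l + 1 by omega]
end

section
/- Let V be a finite-dimensional complex vector space and let B be a nondegenerate symmetric bilinear form on V. Let so(V,B) denote the space of B-skew-adjoint endomorphisms of V, i.e. endomorphisms \gamma with B(\gamma x, y) = -B(x, \gamma y) for all x, y in V. Let H be an isotropic subspace of V, i.e. H is contained in its B-orthogonal complement H^{perp}. Define E = { \gamma in so(V,B) : \gamma(H^{perp}) = 0 } and E-check = { \gamma in so(V,B) : \gamma(H) is contained in H^{perp} }. Then E-check equals the orthogonal complement of E inside so(V,B) with respect to the trace form (M, N) \mapsto trace(M \circ N); that is, E-check = { \gamma in so(V,B) : trace(\gamma \circ \delta) = 0 for all \delta in E }. -/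
/-!
If `γ` maps `H` into `H^⊥` and `δ ∈ 𝔰𝔬(V,B)` kills `H^⊥`, then skewness gives
`δ(V) ⊆ H^⊥^⊥ = H`, so `δ ∘ γ ∘ δ = 0`; hence `γ ∘ δ` squares to zero and is traceless.

Conversely, for `a, b ∈ H` the endomorphism `v ↦ B(a, v) b - B(b, v) a` is skew and kills `H^⊥`,
and its trace pairing with a skew `γ` is `2 B(a, γ b)`. If all these pairings vanish,
then `γ(H) ⊆ H^⊥`.
-/


/-- Fiberwise duality of the families `E` and `Ě` under the trace form
(part (2) of the Lemma on the families over the orthogonal Grassmannian):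
for a nondegenerate symmetric bilinear form `B` on a finite-dimensional complex
vector space `V` and an isotropic subspace `H ⊆ H^⊥`, the space
`Ě = {γ ∈ 𝔰𝔬(V,B) : γ(H) ⊆ H^⊥}` is the orthogonal complement, inside
`𝔰𝔬(V,B) = {γ : B(γx, y) = -B(x, γy)}`, of `E = {γ ∈ 𝔰𝔬(V,B) : γ(H^⊥) = 0}`
with respect to the trace form `(M, N) ↦ tr(M ∘ N)`. -/
theorem echeck_eq_trace_orthogonal_of_e
    (V : Type*) [AddCommGroup V] [Module ℂ V] [FiniteDimensional ℂ V]
    (B : LinearMap.BilinForm ℂ V) (hB : B.Nondegenerate)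
    (hsymm : ∀ x y, B x y = B y x)
    (H : Submodule ℂ V) (hH : H ≤ B.orthogonal H) :
    {γ : Module.End ℂ V | (∀ x y, B (γ x) y = -B x (γ y)) ∧
        ∀ x ∈ H, γ x ∈ B.orthogonal H} =
      {γ : Module.End ℂ V | (∀ x y, B (γ x) y = -B x (γ y)) ∧
        ∀ δ : Module.End ℂ V,
          ((∀ x y, B (δ x) y = -B x (δ y)) ∧ ∀ x ∈ B.orthogonal H, δ x = 0) →
            LinearMap.trace ℂ V (γ ∘ₗ δ) = 0} := by
  have hrefl : B.IsRefl := fun x y h => by rw [hsymm]; exact h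
  ext γ
  simp only [Set.mem_ofPred_eq]
  refine and_congr_right fun hγ => ⟨fun h δ hδ => ?_, fun h b hb => ?_⟩
  · obtain ⟨hδs, hδ0⟩ := hδ
    have hrange : ∀ x, δ x ∈ H := fun x => by
      rw [← LinearMap.BilinForm.orthogonal_orthogonal hB hrefl H,
        LinearMap.BilinForm.mem_orthogonal_iff]
      intro y hy
      rw [hsymm, hδs, hδ0 y hy, map_zero, neg_zero]
    have hnil : IsNilpotent (γ ∘ₗ δ : Module.End ℂ V) := by
      refine ⟨2, ?_⟩
      ext x
      simp [pow_two, hδ0 _ (h _ (hrange x))]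
    exact (LinearMap.isNilpotent_trace_of_isNilpotent hnil).eq_zero
  · rw [LinearMap.BilinForm.mem_orthogonal_iff]
    intro a ha
    have key := h ((B a).smulRight b - (B b).smulRight a) ⟨fun x y => ?_, fun x hx => ?_⟩
    · have hcomp : γ ∘ₗ ((B a).smulRight b - (B b).smulRight a) =
          (B a).smulRight (γ b) - (B b).smulRight (γ a) := by
        ext x
        simp
      rw [hcomp, map_sub, LinearMap.trace_smulRight, LinearMap.trace_smulRight,
        hsymm b (γ a), hγ a b, sub_neg_eq_add] at key
      exact self_eq_neg.mp (eq_neg_of_add_eq_zero_left key)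
    · simp only [LinearMap.sub_apply, LinearMap.smulRight_apply, map_sub, map_smul, LinearMap.smul_apply,
        smul_eq_mul, hsymm x]
      ring
    · have h1 : B a x = 0 := hx a ha
      have h2 : B b x = 0 := hx b hb
      simp [h1, h2]
end
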